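/- Fix l ≥ 2. For symmetric l×l matrices α = (α_{ij}) and β = (β_{ij}) of natural numbers with zero diagonal, let Ξ[α] = ∏_{i<j} (u_i^{(1)}u_j^{(2)} − u_i^{(2)}u_j^{(1)})^{α_{ij}}, a polynomial in the 2l complex variables u_j^{(1)}, u_j^{(2)} (j = 1,…,l). Let 𝐓 = (t_{ij}) and 𝐓' = (t'_{ij}) be skew-symmetric real l×l matrices. Then there exists ε > 0 such that whenever all |t_{ij}| < ε and |t'_{ij}| < ε, the series S = Σ_{α} Σ_{β} (∏_{i<j} t_{ij}^{α_{ij}} t'_{ij}^{β_{ij}} / (α_{ij}!·β_{ij}!)) · ⟨Ξ[α], Ξ[β]⟩, summed over all pairs of symmetric natural-number matrices with zero diagonal, converges and satisfies S · det(1 + 𝐓·𝐓') = 1, i.e. S = det(1 + 𝐓·𝐓')^{−1}. -/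

import Mathlib

set_option autoImplicit false

open MvPolynomial Matrix

/-- The Fock inner product on polynomials in the `2l` variables `u_j^{(1)}, u_j^{(2)}`:
monomials are pairwise orthogonal and `‖∏ variablesᵏ‖² = ∏ k!`. -/
noncomputable def fockInnerL {l : ℕ} (f g : MvPolynomial (Fin l × Fin 2) ℂ) : ℂ :=
  ∑ d ∈ f.support, f.coeff d * star (g.coeff d) * ∏ i, ((d i).factorial : ℂ)

/-- `Ξ[α] = ∏_{i<j} (u_i^{(1)}u_j^{(2)} − u_i^{(2)}u_j^{(1)})^{α_{ij}}`. -/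
noncomputable def XiL {l : ℕ} (α : Matrix (Fin l) (Fin l) ℕ) :
    MvPolynomial (Fin l × Fin 2) ℂ :=
  ∏ p ∈ Finset.univ.filter (fun p : Fin l × Fin l => p.1 < p.2),
    (X (p.1, 0) * X (p.2, 1) - X (p.1, 1) * X (p.2, 0)) ^ α p.1 p.2

/-- The action `f(u₁,…,u_l) ↦ f(u₁A₁,…,u_lA_l)`. -/
noncomputable def actL {l : ℕ} (A : Fin l → Matrix (Fin 2) (Fin 2) ℂ)
    (f : MvPolynomial (Fin l × Fin 2) ℂ) : MvPolynomial (Fin l × Fin 2) ℂ :=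
  MvPolynomial.aeval
    (fun v : Fin l × Fin 2 =>
      C (A v.1 0 v.2) * X (v.1, 0) + C (A v.1 1 v.2) * X (v.1, 1)) f

/-- The matrix coefficient `Φ[α,β](A₁,…,A_l) = ⟨(⊗T(A_j))Ξ[α], Ξ[β]⟩`. -/
noncomputable def PhiL {l : ℕ} (α β : Matrix (Fin l) (Fin l) ℕ)
    (A : Fin l → Matrix (Fin 2) (Fin 2) ℂ) : ℂ :=
  fockInnerL (actL A (XiL α)) (XiL β)

/-- Symmetric `l×l` matrices of natural numbers with zero diagonal. -/
def SymZeroDiag (l : ℕ) : Type :=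
  {M : Matrix (Fin l) (Fin l) ℕ // M.transpose = M ∧ ∀ i, M i i = 0}

/-- The `2l×2l` matrix with `2×2` blocks `t_{ij}·[[0,1],[−1,0]]`. -/
noncomputable def blockT {l : ℕ} (t : Matrix (Fin l) (Fin l) ℝ) :
    Matrix (Fin l × Fin 2) (Fin l × Fin 2) ℂ :=
  Matrix.of fun p q => (t p.1 q.1 : ℂ) * !![0, 1; -1, 0] p.2 q.2

/-- The block-diagonal `2l×2l` matrix with diagonal blocks `A₁,…,A_l`. -/
noncomputable def blockDiagU {l : ℕ} (A : Fin l → Matrix (Fin 2) (Fin 2) ℂ) :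
    Matrix (Fin l × Fin 2) (Fin l × Fin 2) ℂ :=
  Matrix.of fun p q => if p.1 = q.1 then A p.1 p.2 q.2 else 0

/-!
Write `q_A = ∑ i j, A i j * u_i^{(1)} * u_j^{(2)}`. For skew-symmetric `t` the form `q_t` is the sum
of `t_{ij}` times the brackets in `Ξ`, so the exponential series groups the double sum by degree
into `∑ n, ⟨q_tⁿ / n!, q_{t'}ⁿ / n!⟩`.

Let `G(z) = ⟨exp (z q_A), exp q_B⟩` and `W_{ij}(z) = ⟨u_i^{(1)} u_j^{(2)} exp (z q_A), exp q_B⟩`.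
Multiplication by a variable is adjoint to differentiation, which gives `W = G B + z B Aᵀ W` and
`G' = tr (Aᵀ W)`. By Jacobi's formula `det (1 - z B Aᵀ) * G` then has derivative zero, so it is
constantly `1`; at `z = 1` this is the claim.

For convergence, the series is dominated term by term by the one for the matrices of absolute
values, and that one by the case in which all entries equal `r`, where `B Aᵀ` has rank one and `G`
is the geometric series with ratio `(l r)²`.
-/

theorem derivation_prod {R S ι : Type*} [CommSemiring R] [CommSemiring S] [Algebra R S]
    [DecidableEq ι] (δ : Derivation R S S) (s : Finset ι) (f : ι → S) :
    δ (∏ i ∈ s, f i) = ∑ i ∈ s, δ (f i) * ∏ j ∈ s.erase i, f j := by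
  induction s using Finset.induction_on with
  | empty => simp
  | insert a s ha ih =>
    have herase : ∀ i ∈ s, ∏ j ∈ (insert a s).erase i, f j = f a * ∏ j ∈ s.erase i, f j := by
      intro i hi
      rw [Finset.erase_insert_of_ne (ne_of_mem_of_not_mem hi ha).symm,
        Finset.prod_insert (fun h => ha (Finset.mem_of_mem_erase h))]
    rw [Finset.prod_insert ha, Derivation.leibniz, ih, Finset.sum_insert ha,
      Finset.erase_insert ha, smul_eq_mul, smul_eq_mul, Finset.mul_sum, mul_comm _ (δ (f a)),
      add_comm]
    congr 1
    refine Finset.sum_congr rfl fun i hi => ?_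
    rw [herase i hi, mul_left_comm]

section Determinant

variable {R S n : Type*} [CommRing R] [CommRing S] [Algebra R S] [Fintype n] [DecidableEq n]

theorem derivation_det_eq_sum_det_updateCol (δ : Derivation R S S) (M : Matrix n n S) :
    δ M.det = ∑ i, (M.updateCol i fun k => δ (M k i)).det := by
  simp only [Matrix.det_apply, map_sum]
  rw [Finset.sum_comm]
  refine Finset.sum_congr rfl fun σ _ => ?_
  rw [← Finset.smul_sum, Units.smul_def, Units.smul_def, map_zsmul, derivation_prod]
  congr 1
  refine Finset.sum_congr rfl fun i _ => ?_
  rw [← Finset.mul_prod_erase Finset.univ _ (Finset.mem_univ i), Matrix.updateCol_self]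
  congr 1
  refine Finset.prod_congr rfl fun j hj => ?_
  rw [Matrix.updateCol_ne (Finset.ne_of_mem_erase hj)]

/-- **Jacobi's formula**. -/
theorem derivation_det (δ : Derivation R S S) (M : Matrix n n S) :
    δ M.det = (M.adjugate * M.map δ).trace := by
  rw [derivation_det_eq_sum_det_updateCol, Matrix.trace]
  refine Finset.sum_congr rfl fun i _ => ?_
  rw [← Matrix.cramer_apply, Matrix.cramer_eq_adjugate_mulVec]
  rfl

theorem derivation_det_mul_eq_zero (δ : Derivation R S S) {M W A B : Matrix n n S} {g : S}
    (hM : M.map δ = -(B * Aᵀ)) (hW : M * W = g • B) (hg : δ g = (Aᵀ * W).trace) :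
    δ (M.det * g) = 0 := by
  have hdetW : M.det • W = g • (M.adjugate * B) := by
    rw [← Matrix.mul_smul, ← hW, ← Matrix.mul_assoc, Matrix.adjugate_mul, smul_mul_assoc, one_mul]
  have hdet : δ M.det = -(Aᵀ * (M.adjugate * B)).trace := by
    rw [derivation_det, hM, mul_neg, trace_neg, ← Matrix.mul_assoc, Matrix.trace_mul_comm]
  calc δ (M.det * g) = (Aᵀ * (M.det • W)).trace + g * δ M.det := by
        rw [Derivation.leibniz, hg, mul_smul_comm, trace_smul, smul_eq_mul, smul_eq_mul]
    _ = 0 := by rw [hdetW, hdet, mul_smul_comm, trace_smul, smul_eq_mul, mul_neg, add_neg_cancel]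

end Determinant

section FockForm

variable {σ R : Type*} [Fintype σ] [CommSemiring R]

/-- The bilinear extension of the Fock pairing to polynomials over any commutative semiring:
monomials are pairwise orthogonal and `xᵈ` pairs with itself to `∏ i, (d i)!`. -/
noncomputable def fockForm : MvPolynomial σ R →ₗ[R] MvPolynomial σ R →ₗ[R] R :=
  (basisMonomials σ R).constr R fun d => ((∏ i, (d i).factorial : ℕ) : R) • lcoeff R d

theorem fockForm_monomial_left (d : σ →₀ ℕ) (a : R) (g : MvPolynomial σ R) :
    fockForm (monomial d a) g = a * g.coeff d * (∏ i, (d i).factorial : ℕ) := by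
  have hd : monomial d a = a • basisMonomials σ R d := by simp [smul_monomial]
  rw [hd, map_smul, fockForm, Module.Basis.constr_basis]
  simp only [LinearMap.smul_apply, lcoeff_apply, smul_eq_mul]
  ring

theorem fockForm_one_one : fockForm (1 : MvPolynomial σ R) 1 = 1 := by
  simpa using fockForm_monomial_left 0 (1 : R) (1 : MvPolynomial σ R)

theorem fockForm_eq_sum (f g : MvPolynomial σ R) {s : Finset (σ →₀ ℕ)} (hs : f.support ⊆ s) :
    fockForm f g = ∑ d ∈ s, f.coeff d * g.coeff d * (∏ i, (d i).factorial : ℕ) := by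
  conv_lhs => rw [f.as_sum, map_sum, LinearMap.sum_apply]
  simp only [fockForm_monomial_left]
  refine Finset.sum_subset hs fun d _ hd => ?_
  rw [notMem_support_iff.1 hd, zero_mul, zero_mul]

theorem fockForm_comm (f g : MvPolynomial σ R) : fockForm f g = fockForm g f := by
  classical
  rw [fockForm_eq_sum f g (Finset.subset_union_left (s₂ := g.support)),
    fockForm_eq_sum g f Finset.subset_union_right]
  exact Finset.sum_congr rfl fun d _ => by rw [mul_comm (f.coeff d)]

theorem fockForm_X_mul (i : σ) (f g : MvPolynomial σ R) :
    fockForm (X i * f) g = fockForm f (pderiv i g) := by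
  classical
  induction f using MvPolynomial.induction_on' with
  | add p q hp hq => simp only [mul_add, map_add, LinearMap.add_apply, hp, hq]
  | monomial d a =>
    have hfact : ∏ j, ((Finsupp.single i 1 + d : σ →₀ ℕ) j).factorial
        = (d i + 1) * ∏ j, (d j).factorial := by
      rw [← Finset.mul_prod_erase Finset.univ _ (Finset.mem_univ i),
        ← Finset.mul_prod_erase Finset.univ (fun j => (d j).factorial) (Finset.mem_univ i),
        ← mul_assoc]
      congr 1
      · simp [add_comm 1, Nat.factorial_succ]
      · refine Finset.prod_congr rfl fun j hj => ?_
        simp [(Finset.ne_of_mem_erase hj).symm]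
    rw [X, monomial_mul, one_mul, fockForm_monomial_left, fockForm_monomial_left, coeff_pderiv,
      hfact, add_comm d]
    push_cast
    ring

theorem fockForm_eq_zero_of_isHomogeneous {f g : MvPolynomial σ R} {m n : ℕ}
    (hf : f.IsHomogeneous m) (hg : g.IsHomogeneous n) (hmn : m ≠ n) : fockForm f g = 0 := by
  rw [fockForm_eq_sum f g subset_rfl]
  refine Finset.sum_eq_zero fun d hd => ?_
  have hgd : g.coeff d = 0 := by
    by_contra hne
    exact hmn ((hf (mem_support_iff.1 hd)).symm.trans (hg hne))
  rw [hgd, mul_zero, zero_mul]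

end FockForm

section DividedPower

variable {σ K : Type*} [Field K]

/-- The divided power `fⁿ / n!`. -/
noncomputable def divPow (f : MvPolynomial σ K) (n : ℕ) : MvPolynomial σ K :=
  (n.factorial : K)⁻¹ • f ^ n

@[simp]
theorem divPow_zero (f : MvPolynomial σ K) : divPow f 0 = 1 := by
  simp [divPow]

theorem divPow_smul (a : K) (f : MvPolynomial σ K) (n : ℕ) :
    divPow (a • f) n = (a ^ n / n.factorial) • f ^ n := by
  rw [divPow, smul_pow, smul_smul, inv_mul_eq_div]

theorem isHomogeneous_divPow {f : MvPolynomial σ K} {k : ℕ} (hf : f.IsHomogeneous k) (n : ℕ) :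
    (divPow f n).IsHomogeneous (k * n) :=
  (homogeneousSubmodule σ K (k * n)).smul_mem _ (hf.pow n)

theorem isHomogeneous_prod_divPow {P : Type*} [Fintype P] {f : P → MvPolynomial σ K} {k : ℕ}
    (hf : ∀ p, (f p).IsHomogeneous k) (α : P → ℕ) :
    (∏ p, divPow (f p) (α p)).IsHomogeneous (k * ∑ p, α p) := by
  rw [Finset.mul_sum]
  exact IsHomogeneous.prod _ _ _ fun p _ => isHomogeneous_divPow (hf p) (α p)

variable [CharZero K]

theorem succ_smul_divPow_succ (f : MvPolynomial σ K) (n : ℕ) :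
    (n + 1 : K) • divPow f (n + 1) = f * divPow f n := by
  have hn : (n + 1 : K) ≠ 0 := n.cast_add_one_ne_zero
  rw [divPow, divPow, smul_smul, Nat.factorial_succ, mul_smul_comm, ← pow_succ']
  push_cast
  rw [mul_inv, mul_inv_cancel_left₀ hn]

theorem pderiv_divPow_succ (i : σ) (f : MvPolynomial σ K) (n : ℕ) :
    pderiv i (divPow f (n + 1)) = pderiv i f * divPow f n := by
  have hn : (n + 1 : K) ≠ 0 := n.cast_add_one_ne_zero
  rw [divPow, divPow, Derivation.map_smul, Derivation.leibniz_pow, Nat.add_sub_cancel, smul_eq_mul,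
    ← Nat.cast_smul_eq_nsmul K, smul_smul, Nat.factorial_succ, mul_smul_comm, mul_comm (f ^ n)]
  push_cast
  rw [mul_comm, mul_inv, mul_inv_cancel_left₀ hn]

theorem divPow_sum {P : Type*} [Fintype P] [DecidableEq P] (f : P → MvPolynomial σ K) (n : ℕ) :
    divPow (∑ p, f p) n = ∑ α ∈ Finset.univ.piAntidiag n, ∏ p, divPow (f p) (α p) := by
  rw [divPow, Finset.sum_pow_eq_sum_piAntidiag, Finset.smul_sum]
  refine Finset.sum_congr rfl fun α hα => ?_
  have hcoeff : (n.factorial : K)⁻¹ * Nat.multinomial Finset.univ α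
      = ∏ p, ((α p).factorial : K)⁻¹ := by
    have hspec := Nat.multinomial_spec Finset.univ α
    rw [(Finset.mem_piAntidiag.1 hα).1] at hspec
    have hprod : ∏ p, ((α p).factorial : K) ≠ 0 :=
      Finset.prod_ne_zero_iff.2 fun p _ => Nat.cast_ne_zero.2 (Nat.factorial_ne_zero _)
    rw [Finset.prod_inv_distrib, inv_mul_eq_iff_eq_mul₀ (Nat.cast_ne_zero.2 n.factorial_ne_zero),
      ← div_eq_mul_inv, eq_div_iff hprod, mul_comm, ← hspec]
    push_cast
    rfl
  simp only [divPow]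
  rw [Finset.prod_smul, ← hcoeff, ← smul_smul, Nat.cast_smul_eq_nsmul, nsmul_eq_mul]

theorem fockForm_divPow_sum {P Q : Type*} [Fintype σ] [Fintype P] [Fintype Q] [DecidableEq P]
    [DecidableEq Q] (f : P → MvPolynomial σ K) (g : Q → MvPolynomial σ K) (n : ℕ) :
    fockForm (divPow (∑ p, f p) n) (divPow (∑ q, g q) n)
      = ∑ x ∈ Finset.univ.piAntidiag n ×ˢ Finset.univ.piAntidiag n,
          fockForm (∏ p, divPow (f p) (x.1 p)) (∏ q, divPow (g q) (x.2 q)) := by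
  rw [divPow_sum f, map_sum, LinearMap.sum_apply, Finset.sum_product]
  simp only [divPow_sum g, map_sum]

end DividedPower

section BilinPoly

variable {ι R : Type*} [Fintype ι] [CommSemiring R]

/-- The bilinear form `∑ i j, A i j * u_i^{(1)} * u_j^{(2)}` with matrix `A`. -/
noncomputable def bilinPoly (A : Matrix ι ι R) : MvPolynomial (ι × Fin 2) R :=
  ∑ i, ∑ j, A i j • (X (i, 0) * X (j, 1))

theorem pderiv_fst_bilinPoly (A : Matrix ι ι R) (i : ι) :
    pderiv (i, 0) (bilinPoly A) = ∑ k, A i k • X (k, 1) := by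
  classical
  simp only [bilinPoly, map_sum, Derivation.map_smul, Derivation.leibniz, pderiv_X, Pi.single_apply]
  rw [Finset.sum_eq_single_of_mem i (Finset.mem_univ i) fun k _ hk => by simp [hk]]
  simp

theorem pderiv_snd_bilinPoly (A : Matrix ι ι R) (j : ι) :
    pderiv (j, 1) (bilinPoly A) = ∑ k, A k j • X (k, 0) := by
  classical
  simp only [bilinPoly, map_sum, Derivation.map_smul, Derivation.leibniz, pderiv_X, Pi.single_apply]
  refine Finset.sum_congr rfl fun k _ => ?_
  rw [Finset.sum_eq_single_of_mem j (Finset.mem_univ j) fun m _ hm => by simp [hm]]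
  simp

end BilinPoly

section FockCoeff

variable {ι K : Type*} [Fintype ι] [Field K]

/-- The coefficient of `zⁿ` in the generating function `⟨exp (z q_A), exp q_B⟩`, where `q_A` and
`q_B` are the bilinear forms with matrices `A` and `B`. -/
noncomputable def fockCoeff (A B : Matrix ι ι K) (n : ℕ) : K :=
  fockForm (divPow (bilinPoly A) n) (divPow (bilinPoly B) n)

/-- The two-point functions `⟨u_i^{(1)} u_j^{(2)} q_Aⁿ / n!, q_Bⁿ⁺¹ / (n + 1)!⟩` that accompany
`fockCoeff`. -/
noncomputable def fockTwoPoint (A B : Matrix ι ι K) (n : ℕ) : Matrix ι ι K :=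
  of fun i j => fockForm (X (i, 0) * (X (j, 1) * divPow (bilinPoly A) n))
    (divPow (bilinPoly B) (n + 1))

theorem fockCoeff_zero (A B : Matrix ι ι K) : fockCoeff A B 0 = 1 := by
  rw [fockCoeff, divPow_zero, divPow_zero, fockForm_one_one]

variable [CharZero K]

theorem trace_transpose_mul_fockTwoPoint (A B : Matrix ι ι K) (n : ℕ) :
    (Aᵀ * fockTwoPoint A B n).trace = (n + 1) * fockCoeff A B (n + 1) := by
  have hexpand : (n + 1 : K) • divPow (bilinPoly A) (n + 1)
      = ∑ i, ∑ j, A i j • (X (i, 0) * (X (j, 1) * divPow (bilinPoly A) n)) := by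
    rw [succ_smul_divPow_succ]
    nth_rw 1 [bilinPoly]
    simp only [Finset.sum_mul, smul_mul_assoc, mul_assoc]
  rw [fockCoeff, ← smul_eq_mul (n + 1 : K), ← LinearMap.smul_apply, ← map_smul, hexpand]
  simp only [map_sum, map_smul, LinearMap.sum_apply, LinearMap.smul_apply, smul_eq_mul]
  rw [Finset.sum_comm]
  rfl

theorem fockTwoPoint_apply (A B : Matrix ι ι K) (n : ℕ) (i j : ι) :
    fockTwoPoint A B n i j = ∑ k, B i k *
      fockForm (pderiv (k, 1) (X (j, 1) * divPow (bilinPoly A) n)) (divPow (bilinPoly B) n) := by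
  rw [fockTwoPoint, of_apply, fockForm_X_mul, pderiv_divPow_succ, pderiv_fst_bilinPoly,
    Finset.sum_mul, map_sum]
  refine Finset.sum_congr rfl fun k _ => ?_
  rw [smul_mul_assoc, map_smul, smul_eq_mul, fockForm_comm, fockForm_X_mul, fockForm_comm]

theorem fockTwoPoint_zero (A B : Matrix ι ι K) : fockTwoPoint A B 0 = fockCoeff A B 0 • B := by
  ext i j
  classical
  rw [fockTwoPoint_apply, Finset.sum_eq_single_of_mem j (Finset.mem_univ j)]
  · simp [fockCoeff, mul_comm]
  · intro k _ hk
    simp [pderiv_X, hk.symm]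

theorem fockTwoPoint_succ (A B : Matrix ι ι K) (n : ℕ) :
    fockTwoPoint A B (n + 1) = fockCoeff A B (n + 1) • B + B * Aᵀ * fockTwoPoint A B n := by
  classical
  ext i j
  have hpderiv : ∀ k, pderiv (k, 1) (X (j, 1) * divPow (bilinPoly A) (n + 1))
      = (if k = j then divPow (bilinPoly A) (n + 1) else 0)
        + ∑ m, A m k • (X (m, 0) * (X (j, 1) * divPow (bilinPoly A) n)) := by
    intro k
    rw [Derivation.leibniz, pderiv_divPow_succ, pderiv_snd_bilinPoly, Finset.sum_mul,
      smul_eq_mul, Finset.mul_sum, add_comm]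
    congr 1
    · rcases eq_or_ne k j with rfl | hk
      · simp
      · simp [hk]
    · refine Finset.sum_congr rfl fun m _ => ?_
      rw [smul_mul_assoc, mul_smul_comm, mul_left_comm]
  rw [fockTwoPoint_apply, Matrix.mul_assoc]
  simp only [hpderiv, map_add, LinearMap.add_apply, mul_add, Finset.sum_add_distrib,
    Matrix.add_apply]
  congr 1
  · rw [Finset.sum_eq_single_of_mem j (Finset.mem_univ j) fun k _ hk => by simp [hk]]
    simp [fockCoeff, mul_comm]
  · simp [Matrix.mul_apply, fockTwoPoint]

end FockCoeff

section GeneratingSeries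

open scoped PowerSeries

theorem coe_charpolyRev {ι R : Type*} [Fintype ι] [DecidableEq ι] [CommRing R]
    (N : Matrix ι ι R) :
    (N.charpolyRev : R⟦X⟧) = (1 - (PowerSeries.X : R⟦X⟧) • N.map PowerSeries.C).det := by
  rw [charpolyRev, ← Polynomial.coeToPowerSeries.ringHom_apply, RingHom.map_det]
  congr 1
  ext1 i j
  simp [one_apply, apply_ite, mul_comm (PowerSeries.C _)]

theorem map_derivative_one_sub_X_smul {ι R : Type*} [DecidableEq ι] [CommRing R]
    (N : Matrix ι ι R) :
    (1 - (PowerSeries.X : R⟦X⟧) • N.map PowerSeries.C).map (PowerSeries.derivative R)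
      = -N.map PowerSeries.C := by
  ext1 i j
  simp [one_apply, apply_ite]

theorem charpolyRev_const {ι R : Type*} [Fintype ι] [DecidableEq ι] [CommRing R] (a : R) :
    (of fun _ _ : ι => a).charpolyRev = 1 - Polynomial.C (Fintype.card ι * a) * Polynomial.X := by
  have hrankOne : 1 - (Polynomial.X : Polynomial R) • (of fun _ _ : ι => a).map Polynomial.C
      = 1 + replicateCol Unit (fun _ : ι => -(Polynomial.X * Polynomial.C a))
          * replicateRow Unit (fun _ : ι => (1 : Polynomial R)) := by
    ext1 i j
    simp [Matrix.mul_apply, sub_eq_add_neg]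
  rw [Matrix.charpolyRev, hrankOne, det_one_add_replicateCol_mul_replicateRow]
  simp [dotProduct, sub_eq_add_neg, mul_assoc, Polynomial.X_mul_C]

variable {ι K : Type*} [Fintype ι] [Field K]

/-- The matrix of generating functions of the two-point functions `fockTwoPoint`. -/
noncomputable def fockTwoPointSeries (A B : Matrix ι ι K) : Matrix ι ι K⟦X⟧ :=
  of fun i j => PowerSeries.mk fun n => fockTwoPoint A B n i j

variable [CharZero K]

theorem derivative_mk_fockCoeff (A B : Matrix ι ι K) :
    PowerSeries.derivative K (PowerSeries.mk (fockCoeff A B))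
      = ((A.map PowerSeries.C)ᵀ * fockTwoPointSeries A B).trace := by
  ext n
  rw [PowerSeries.coeff_derivative, PowerSeries.coeff_mk, mul_comm,
    ← trace_transpose_mul_fockTwoPoint]
  simp [Matrix.trace, Matrix.mul_apply, fockTwoPointSeries]

variable [DecidableEq ι]

theorem one_sub_X_smul_mul_fockTwoPointSeries (A B : Matrix ι ι K) :
    (1 - (PowerSeries.X : K⟦X⟧) • (B * Aᵀ).map PowerSeries.C) * fockTwoPointSeries A B
      = PowerSeries.mk (fockCoeff A B) • B.map PowerSeries.C := by
  rw [sub_mul, one_mul, smul_mul_assoc, sub_eq_iff_eq_add]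
  refine Matrix.ext fun i j => PowerSeries.ext fun n => ?_
  cases n with
  | zero => simp [fockTwoPointSeries, fockTwoPoint_zero]
  | succ n =>
    have hcoeff : PowerSeries.coeff n (((B * Aᵀ).map PowerSeries.C * fockTwoPointSeries A B) i j)
        = (B * Aᵀ * fockTwoPoint A B n) i j := by
      rw [Matrix.mul_apply, Matrix.mul_apply, map_sum]
      simp only [map_apply, PowerSeries.coeff_C_mul, fockTwoPointSeries, of_apply,
        PowerSeries.coeff_mk]
    rw [Matrix.add_apply, map_add, Matrix.smul_apply _ (_ * _), smul_eq_mul,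
      PowerSeries.coeff_succ_X_mul, hcoeff]
    simp [fockTwoPointSeries, fockTwoPoint_succ]

theorem charpolyRev_mul_mk_fockCoeff (A B : Matrix ι ι K) :
    ((B * Aᵀ).charpolyRev : K⟦X⟧) * PowerSeries.mk (fockCoeff A B) = 1 := by
  apply PowerSeries.derivative.ext
  · rw [Derivation.map_one_eq_zero, coe_charpolyRev]
    refine derivation_det_mul_eq_zero _ ?_ (one_sub_X_smul_mul_fockTwoPointSeries A B)
      (derivative_mk_fockCoeff A B)
    rw [map_derivative_one_sub_X_smul, Matrix.map_mul, transpose_map]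
  · simp [fockCoeff_zero, Polynomial.coeff_zero_eq_eval_zero]

omit [DecidableEq ι] in
theorem fockCoeff_const (r : K) (n : ℕ) :
    fockCoeff (of fun _ _ : ι => r) (of fun _ _ => r) n = ((Fintype.card ι * r) ^ 2) ^ n := by
  classical
  have hmul : (of fun _ _ : ι => r) * (of fun _ _ : ι => r)ᵀ
      = of fun _ _ => Fintype.card ι * r ^ 2 := by
    ext i j
    simp [Matrix.mul_apply, sq]
  have hseries := charpolyRev_mul_mk_fockCoeff (of fun _ _ : ι => r) (of fun _ _ => r)
  rw [hmul, charpolyRev_const] at hseries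
  induction n with
  | zero => rw [fockCoeff_zero, pow_zero]
  | succ n ih =>
    have hcoeff := congrArg (PowerSeries.coeff (n + 1)) hseries
    simp only [Polynomial.coe_sub, Polynomial.coe_one, Polynomial.coe_mul, Polynomial.coe_C,
      Polynomial.coe_X, sub_mul, one_mul, mul_assoc (PowerSeries.C _), map_sub,
      PowerSeries.coeff_C_mul, PowerSeries.coeff_succ_X_mul, PowerSeries.coeff_mk, ih,
      PowerSeries.coeff_one, n.succ_ne_zero, if_false, sub_eq_zero] at hcoeff
    rw [hcoeff]
    ring

end GeneratingSeries

section Evaluation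

variable {R : Type*}

theorem eval_one_mul_tsum_eq_one [NormedCommRing R] [CompleteSpace R] {p : Polynomial R}
    {g : ℕ → R} (hg : Summable fun n => ‖g n‖) (h : (p : PowerSeries R) * PowerSeries.mk g = 1) :
    p.eval 1 * ∑' n, g n = 1 := by
  have hcoeff_zero : ∀ n ∉ p.support, p.coeff n = 0 := fun n => Polynomial.notMem_support_iff.1
  have hp : Summable fun n => ‖p.coeff n‖ :=
    summable_of_ne_finset_zero (s := p.support) fun n hn => by rw [hcoeff_zero n hn, norm_zero]
  have heval : p.eval 1 = ∑' n, p.coeff n := by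
    rw [tsum_eq_sum hcoeff_zero, Polynomial.eval_eq_sum, Polynomial.sum]
    simp only [one_pow, mul_one]
  have hconv : ∀ n, ∑ kl ∈ Finset.HasAntidiagonal.antidiagonal n, p.coeff kl.1 * g kl.2
      = if n = 0 then 1 else 0 := by
    intro n
    simpa [PowerSeries.coeff_mul, PowerSeries.coeff_one] using congrArg (PowerSeries.coeff n) h
  rw [heval, tsum_mul_tsum_eq_tsum_sum_antidiagonal_of_summable_norm hp hg]
  simp only [hconv, tsum_ite_eq]

theorem eval_one_charpolyRev {ι : Type*} [Fintype ι] [DecidableEq ι] [CommRing R]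
    (N : Matrix ι ι R) : N.charpolyRev.eval 1 = (1 - N).det := by
  rw [Matrix.charpolyRev, ← Polynomial.coe_evalRingHom, RingHom.map_det]
  congr 1
  ext1 i j
  simp [one_apply, apply_ite]

end Evaluation

section Majorant

variable {σ : Type*}

/-- `g` is a majorant of `f`: its coefficients bound the absolute values of those of `f`. -/
def IsMajorant {R : Type*} [NormedCommRing R] (g : MvPolynomial σ ℝ) (f : MvPolynomial σ R) :
    Prop :=
  ∀ d, ‖f.coeff d‖ ≤ g.coeff d

namespace IsMajorant

section NormedCommRing

variable {R : Type*} [NormedCommRing R] {f f' : MvPolynomial σ R} {g g' : MvPolynomial σ ℝ}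

theorem support_subset (h : IsMajorant g f) : f.support ⊆ g.support := by
  intro d hd
  exact mem_support_iff.2 ((norm_pos_iff.2 (mem_support_iff.1 hd)).trans_le (h d)).ne'

theorem add (h : IsMajorant g f) (h' : IsMajorant g' f') : IsMajorant (g + g') (f + f') := by
  intro d
  rw [coeff_add, coeff_add]
  exact norm_add_le_of_le (h d) (h' d)

theorem sum {P : Type*} {s : Finset P} {f : P → MvPolynomial σ R} {g : P → MvPolynomial σ ℝ}
    (h : ∀ p ∈ s, IsMajorant (g p) (f p)) : IsMajorant (∑ p ∈ s, g p) (∑ p ∈ s, f p) := by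
  intro d
  rw [coeff_sum, coeff_sum]
  exact norm_sum_le_of_le s fun p hp => h p hp d

theorem smul {a : R} {b : ℝ} (hab : ‖a‖ ≤ b) (h : IsMajorant g f) :
    IsMajorant (b • g) (a • f) := by
  intro d
  rw [coeff_smul, coeff_smul]
  exact norm_mul_le_of_le hab (h d)

theorem mul (h : IsMajorant g f) (h' : IsMajorant g' f') : IsMajorant (g * g') (f * f') := by
  classical
  intro d
  rw [coeff_mul, coeff_mul]
  exact norm_sum_le_of_le _ fun x _ => norm_mul_le_of_le (h x.1) (h' x.2)

variable [NormOneClass R]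

theorem monomial_one (d : σ →₀ ℕ) : IsMajorant (monomial d 1) (monomial d (1 : R)) := by
  classical
  intro e
  rw [coeff_monomial, coeff_monomial]
  split_ifs <;> simp

theorem X (i : σ) : IsMajorant (X i) (X i : MvPolynomial σ R) :=
  monomial_one _

theorem one : IsMajorant 1 (1 : MvPolynomial σ R) :=
  monomial_one 0

theorem pow (h : IsMajorant g f) (n : ℕ) : IsMajorant (g ^ n) (f ^ n) := by
  induction n with
  | zero => simpa only [pow_zero] using one
  | succ n ih => simpa only [pow_succ] using ih.mul h

theorem prod {P : Type*} {s : Finset P} {f : P → MvPolynomial σ R} {g : P → MvPolynomial σ ℝ}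
    (h : ∀ p, IsMajorant (g p) (f p)) : IsMajorant (∏ p ∈ s, g p) (∏ p ∈ s, f p) :=
  Finset.prod_hom_rel one fun p _ _ hp => (h p).mul hp

theorem norm_fockForm_le [Fintype σ] (h : IsMajorant g f) (h' : IsMajorant g' f') :
    ‖fockForm f f'‖ ≤ fockForm g g' := by
  rw [fockForm_eq_sum f f' h.support_subset, fockForm_eq_sum g g' subset_rfl]
  refine norm_sum_le_of_le _ fun d _ => ?_
  have hfact : ‖((∏ i, (d i).factorial : ℕ) : R)‖ ≤ (∏ i, (d i).factorial : ℕ) := by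
    simpa only [norm_one, mul_one] using Nat.norm_cast_le (α := R) (∏ i, (d i).factorial)
  exact norm_mul_le_of_le (norm_mul_le_of_le (h d) (h' d)) hfact

theorem bilinPoly {ι : Type*} [Fintype ι] {A : Matrix ι ι R} {B : Matrix ι ι ℝ}
    (h : ∀ i j, ‖A i j‖ ≤ B i j) : IsMajorant (bilinPoly B) (bilinPoly A) :=
  sum fun i _ => sum fun j _ => ((X _).mul (X _)).smul (h i j)

end NormedCommRing

variable {𝕜 : Type*} [RCLike 𝕜]

theorem divPow {f : MvPolynomial σ 𝕜} {g : MvPolynomial σ ℝ} (h : IsMajorant g f) (n : ℕ) :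
    IsMajorant (divPow g n) (divPow f n) :=
  (h.pow n).smul (by simp)

end IsMajorant

end Majorant

section Convergence

variable {ι 𝕜 : Type*} [Fintype ι] [RCLike 𝕜] {r : ℝ} {A B : Matrix ι ι 𝕜}

theorem norm_fockCoeff_le (hA : ∀ i j, ‖A i j‖ ≤ r) (hB : ∀ i j, ‖B i j‖ ≤ r) (n : ℕ) :
    ‖fockCoeff A B n‖ ≤ ((Fintype.card ι * r) ^ 2) ^ n := by
  rw [← fockCoeff_const]
  exact ((IsMajorant.bilinPoly hA).divPow n).norm_fockForm_le ((IsMajorant.bilinPoly hB).divPow n)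

theorem summable_norm_fockCoeff (hr : |Fintype.card ι * r| < 1) (hA : ∀ i j, ‖A i j‖ ≤ r)
    (hB : ∀ i j, ‖B i j‖ ≤ r) : Summable fun n => ‖fockCoeff A B n‖ :=
  .of_nonneg_of_le (fun _ => norm_nonneg _) (norm_fockCoeff_le hA hB)
    (summable_geometric_of_lt_one (sq_nonneg _) ((sq_lt_one_iff_abs_lt_one _).2 hr))

theorem det_one_sub_mul_tsum_fockCoeff [DecidableEq ι] (hr : |Fintype.card ι * r| < 1)
    (hA : ∀ i j, ‖A i j‖ ≤ r) (hB : ∀ i j, ‖B i j‖ ≤ r) :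
    (1 - B * Aᵀ).det * ∑' n, fockCoeff A B n = 1 := by
  rw [← eval_one_charpolyRev]
  exact eval_one_mul_tsum_eq_one (summable_norm_fockCoeff hr hA hB)
    (charpolyRev_mul_mk_fockCoeff A B)

end Convergence

section GradedSum

variable {X E : Type*} {deg : X → ℕ} {F : ℕ → Finset X}

theorem hasSum_fiber_of_graded [AddCommMonoid E] [TopologicalSpace E] {h : X → E}
    (hdeg : ∀ n, ∀ x ∈ F n, deg x = n) (hsupp : ∀ x, h x ≠ 0 → x ∈ F (deg x)) (n : ℕ) :
    HasSum (fun x : {x // deg x = n} => h x) (∑ x ∈ F n, h x) := by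
  rw [← Finset.sum_subtype_of_mem h (hdeg n)]
  refine hasSum_sum_of_ne_finset_zero fun x hx => ?_
  contrapose! hx
  exact Finset.mem_subtype.2 (by simpa only [x.2] using hsupp x hx)

theorem hasSum_of_graded [NormedAddCommGroup E] [CompleteSpace E] {h : X → E}
    (hdeg : ∀ n, ∀ x ∈ F n, deg x = n) (hsupp : ∀ x, h x ≠ 0 → x ∈ F (deg x))
    (hsum : Summable fun n => ∑ x ∈ F n, ‖h x‖) : HasSum h (∑' n, ∑ x ∈ F n, h x) := by
  have hfiber := hasSum_fiber_of_graded hdeg hsupp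
  have hfiber_norm := hasSum_fiber_of_graded (h := fun x => ‖h x‖) hdeg
    fun x hx => hsupp x (norm_ne_zero_iff.1 hx)
  have hsummable : Summable fun x => ‖h (Equiv.sigmaFiberEquiv deg x)‖ := by
    refine (summable_sigma_of_nonneg fun _ => norm_nonneg _).2
      ⟨fun n => (hfiber_norm n).summable, ?_⟩
    exact hsum.congr fun n => (hfiber_norm n).tsum_eq.symm
  have htotal := hsummable.of_norm.hasSum
  rw [(htotal.sigma hfiber).tsum_eq]
  exact (Equiv.sigmaFiberEquiv deg).hasSum_iff.1 htotal

end GradedSum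

theorem hasSum_fockForm_prod_divPow {σ 𝕜 P Q : Type*} [Fintype σ] [RCLike 𝕜] [Fintype P]
    [Fintype Q] {f : P → MvPolynomial σ 𝕜} {f' : Q → MvPolynomial σ 𝕜} {g : P → MvPolynomial σ ℝ}
    {g' : Q → MvPolynomial σ ℝ} {k : ℕ} (hk : k ≠ 0) (hf : ∀ p, (f p).IsHomogeneous k)
    (hf' : ∀ q, (f' q).IsHomogeneous k) (hg : ∀ p, IsMajorant (g p) (f p))
    (hg' : ∀ q, IsMajorant (g' q) (f' q))
    (hsum : Summable fun n => fockForm (divPow (∑ p, g p) n) (divPow (∑ q, g' q) n)) :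
    HasSum (fun x : (P → ℕ) × (Q → ℕ) =>
        fockForm (∏ p, divPow (f p) (x.1 p)) (∏ q, divPow (f' q) (x.2 q)))
      (∑' n, fockForm (divPow (∑ p, f p) n) (divPow (∑ q, f' q) n)) := by
  classical
  simp only [fockForm_divPow_sum] at hsum ⊢
  refine hasSum_of_graded (deg := fun x : (P → ℕ) × (Q → ℕ) => ∑ p, x.1 p) ?_ ?_ ?_
  · intro n x hx
    exact (Finset.mem_piAntidiag.1 (Finset.mem_product.1 hx).1).1
  · intro x hx
    have hdeg : ∑ p, x.1 p = ∑ q, x.2 q := by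
      contrapose! hx
      exact fockForm_eq_zero_of_isHomogeneous (isHomogeneous_prod_divPow hf x.1)
        (isHomogeneous_prod_divPow hf' x.2) ((mul_right_injective₀ hk).ne hx)
    simp [hdeg]
  · refine .of_nonneg_of_le (fun n => Finset.sum_nonneg fun _ _ => norm_nonneg _)
      (fun n => Finset.sum_le_sum fun x _ => ?_) hsum
    exact (IsMajorant.prod fun p => (hg p).divPow (x.1 p)).norm_fockForm_le
      (IsMajorant.prod fun q => (hg' q).divPow (x.2 q))

theorem diag_eq_zero_of_transpose_eq_neg {ι G : Type*} [AddGroup G] [IsAddTorsionFree G]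
    {t : Matrix ι ι G} (ht : tᵀ = -t) (i : ι) : t i i = 0 :=
  self_eq_neg.1 (congrFun₂ ht i i)

section OrderedPair

variable {ι : Type*} [LinearOrder ι]

/-- The pairs `(i, j)` with `i < j`, which index the factors of `Ξ[α]`. -/
abbrev OrderedPair (ι : Type*) [LT ι] : Type _ :=
  {p : ι × ι // p.1 < p.2}

theorem sum_orderedPair [Fintype ι] {M : Type*} [AddCommMonoid M] {F : ι → ι → M}
    (hF : ∀ i, F i i = 0) :
    ∑ p : OrderedPair ι, (F p.1.1 p.1.2 + F p.1.2 p.1.1) = ∑ i, ∑ j, F i j := by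
  have hsplit : ∀ i j, F i j = (if i < j then F i j else 0) + if j < i then F i j else 0 := by
    intro i j
    rcases lt_trichotomy i j with h | rfl | h
    · simp [h, h.not_gt]
    · simp [hF]
    · simp [h, h.not_gt]
  have hlower : ∑ i, ∑ j, F i j = ∑ i, ∑ j, if i < j then F i j + F j i else 0 := by
    simp only [ite_add_zero, Finset.sum_add_distrib]
    rw [Finset.sum_comm (f := fun i j => if i < j then F j i else 0)]
    simp only [← Finset.sum_add_distrib, ← hsplit]
  rw [hlower, ← Fintype.sum_prod_type' fun i j => if i < j then F i j + F j i else 0,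
    ← Finset.sum_filter]
  exact (Finset.sum_subtype _ (fun p => by simp) fun p : ι × ι => F p.1 p.2 + F p.2 p.1).symm

variable {R : Type*} [CommSemiring R]

/-- The two terms of `bilinPoly A` that involve both `i` and `j`, for an ordered pair `(i, j)`. -/
noncomputable def pairForm (A : Matrix ι ι R) (p : OrderedPair ι) : MvPolynomial (ι × Fin 2) R :=
  A p.1.1 p.1.2 • (X (p.1.1, 0) * X (p.1.2, 1)) + A p.1.2 p.1.1 • (X (p.1.2, 0) * X (p.1.1, 1))

theorem sum_pairForm [Fintype ι] {A : Matrix ι ι R} (hA : ∀ i, A i i = 0) :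
    ∑ p, pairForm A p = bilinPoly A :=
  sum_orderedPair (F := fun i j => A i j • (X (i, 0) * X (j, 1))) fun i => by rw [hA, zero_smul]

theorem isHomogeneous_pairForm (A : Matrix ι ι R) (p : OrderedPair ι) :
    (pairForm A p).IsHomogeneous 2 :=
  have hXX (u v : ι × Fin 2) : (X u * X v : MvPolynomial (ι × Fin 2) R).IsHomogeneous 2 :=
    (isHomogeneous_X R u).mul (isHomogeneous_X R v)
  (homogeneousSubmodule _ R 2).add_mem ((homogeneousSubmodule _ R 2).smul_mem _ (hXX _ _))
    ((homogeneousSubmodule _ R 2).smul_mem _ (hXX _ _))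

theorem isMajorant_pairForm {S : Type*} [NormedCommRing S] [NormOneClass S] (A : Matrix ι ι S)
    (p : OrderedPair ι) : IsMajorant (pairForm (A.map norm) p) (pairForm A p) :=
  have hXX (u v : ι × Fin 2) : IsMajorant (X u * X v) (X u * X v : MvPolynomial (ι × Fin 2) S) :=
    (IsMajorant.X u).mul (.X v)
  ((hXX _ _).smul le_rfl).add ((hXX _ _).smul le_rfl)

theorem pairForm_eq_smul_of_transpose_eq_neg {S : Type*} [CommRing S] {t : Matrix ι ι S}
    (ht : tᵀ = -t) (p : OrderedPair ι) :
    pairForm t p = t p.1.1 p.1.2 • (X (p.1.1, 0) * X (p.1.2, 1) - X (p.1.1, 1) * X (p.1.2, 0)) := by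
  have hp : t p.1.2 p.1.1 = -t p.1.1 p.1.2 := congrFun₂ ht p.1.1 p.1.2
  rw [pairForm, hp, neg_smul, ← sub_eq_add_neg, smul_sub, mul_comm (X (p.1.2, 0))]

theorem hasSum_fockForm_prod_divPow_pairForm [Fintype ι] {𝕜 : Type*} [RCLike 𝕜] {r : ℝ}
    {A B : Matrix ι ι 𝕜} (hr : |Fintype.card ι * r| < 1) (hA : ∀ i j, ‖A i j‖ ≤ r)
    (hB : ∀ i j, ‖B i j‖ ≤ r) (hA₀ : ∀ i, A i i = 0) (hB₀ : ∀ i, B i i = 0) :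
    HasSum (fun x : (OrderedPair ι → ℕ) × (OrderedPair ι → ℕ) =>
        fockForm (∏ p, divPow (pairForm A p) (x.1 p)) (∏ p, divPow (pairForm B p) (x.2 p)))
      (1 - B * Aᵀ).det⁻¹ := by
  have hmajorant : Summable (fockCoeff (A.map norm) (B.map norm)) :=
    .of_norm (summable_norm_fockCoeff hr (by simpa using hA) (by simpa using hB))
  rw [inv_eq_of_mul_eq_one_right (det_one_sub_mul_tsum_fockCoeff hr hA hB)]
  simp only [fockCoeff, ← sum_pairForm hA₀, ← sum_pairForm hB₀]
  refine hasSum_fockForm_prod_divPow two_ne_zero (isHomogeneous_pairForm A)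
    (isHomogeneous_pairForm B) (isMajorant_pairForm A) (isMajorant_pairForm B) ?_
  rw [sum_pairForm (by simpa using hA₀), sum_pairForm (by simpa using hB₀)]
  exact hmajorant

end OrderedPair

section Xi

variable {l : ℕ}

theorem fockInnerL_eq_fockForm (f g : MvPolynomial (Fin l × Fin 2) ℂ) :
    fockInnerL f g = fockForm f (map (starRingEnd ℂ) g) := by
  rw [fockForm_eq_sum f _ subset_rfl, fockInnerL]
  simp [coeff_map]

theorem map_conj_XiL (α : Matrix (Fin l) (Fin l) ℕ) :
    map (starRingEnd ℂ) (XiL α) = XiL α := by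
  simp [XiL]

theorem prod_divPow_pairForm {t : Matrix (Fin l) (Fin l) ℂ} (ht : tᵀ = -t)
    (α : Matrix (Fin l) (Fin l) ℕ) :
    ∏ p : OrderedPair (Fin l), divPow (pairForm t p) (α p.1.1 p.1.2)
      = (∏ p ∈ Finset.univ.filter (fun p : Fin l × Fin l => p.1 < p.2),
          t p.1 p.2 ^ α p.1 p.2 / (α p.1 p.2).factorial) • XiL α := by
  simp only [pairForm_eq_smul_of_transpose_eq_neg ht, divPow_smul, Finset.prod_smul, XiL]
  rw [Finset.prod_subtype (p := fun p : Fin l × Fin l => p.1 < p.2) _ (by simp),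
    Finset.prod_subtype (p := fun p : Fin l × Fin l => p.1 < p.2) _ (by simp)]

theorem prod_mul_fockInnerL_XiL {t t' : Matrix (Fin l) (Fin l) ℂ} (ht : tᵀ = -t) (ht' : t'ᵀ = -t')
    (α β : Matrix (Fin l) (Fin l) ℕ) :
    (∏ p ∈ Finset.univ.filter (fun p : Fin l × Fin l => p.1 < p.2),
        t p.1 p.2 ^ α p.1 p.2 * t' p.1 p.2 ^ β p.1 p.2 /
          ((α p.1 p.2).factorial * (β p.1 p.2).factorial : ℕ)) * fockInnerL (XiL α) (XiL β)
      = fockForm (∏ p : OrderedPair (Fin l), divPow (pairForm t p) (α p.1.1 p.1.2))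
          (∏ p : OrderedPair (Fin l), divPow (pairForm t' p) (β p.1.1 p.1.2)) := by
  simp only [fockInnerL_eq_fockForm, map_conj_XiL, prod_divPow_pairForm ht,
    prod_divPow_pairForm ht', map_smul, LinearMap.smul_apply, smul_eq_mul, ← mul_assoc,
    ← Finset.prod_mul_distrib, div_mul_div_comm, Nat.cast_mul]
  simp only [mul_comm]

/-- A symmetric matrix with zero diagonal is determined by its entries above the diagonal. -/
def symZeroDiagEquiv (l : ℕ) : SymZeroDiag l ≃ (OrderedPair (Fin l) → ℕ) where
  toFun M p := M.1 p.1.1 p.1.2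
  invFun α := ⟨of fun i j =>
      if h : i < j then α ⟨(i, j), h⟩ else if h : j < i then α ⟨(j, i), h⟩ else 0, by
    refine ⟨Matrix.ext fun i j => ?_, fun i => by simp⟩
    rcases lt_trichotomy i j with h | rfl | h
    · simp [h, h.not_gt]
    · simp
    · simp [h, h.not_gt]⟩
  left_inv M := by
    refine Subtype.ext (Matrix.ext fun i j => ?_)
    have hsymm : M.1 j i = M.1 i j := congrFun₂ M.2.1 i j
    rcases lt_trichotomy i j with h | rfl | h
    · simp [h]
    · simp [M.2.2]
    · simp [h, h.not_gt, hsymm]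
  right_inv α := by
    ext p
    simp [p.2]

end Xi

theorem generating_function_inner_products_general {l : ℕ} {r : ℝ} (hr : |l * r| < 1)
    {t t' : Matrix (Fin l) (Fin l) ℂ} (ht : tᵀ = -t) (ht' : t'ᵀ = -t')
    (htr : ∀ i j, ‖t i j‖ ≤ r) (htr' : ∀ i j, ‖t' i j‖ ≤ r) :
    HasSum
        (fun ab : SymZeroDiag l × SymZeroDiag l =>
          (∏ p ∈ Finset.univ.filter (fun p : Fin l × Fin l => p.1 < p.2),
            t p.1 p.2 ^ ab.1.val p.1 p.2 * t' p.1 p.2 ^ ab.2.val p.1 p.2 /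
              ((ab.1.val p.1 p.2).factorial * (ab.2.val p.1 p.2).factorial : ℕ))
            * fockInnerL (XiL ab.1.val) (XiL ab.2.val))
        (1 + t * t').det⁻¹ ∧
      (1 + t * t').det ≠ 0 := by
  have hdet : (1 - t' * tᵀ).det = (1 + t * t').det := by
    rw [ht, mul_neg, sub_neg_eq_add, det_one_add_mul_comm]
  have hr' : |(Fintype.card (Fin l) : ℝ) * r| < 1 := by rwa [Fintype.card_fin]
  refine ⟨?_, hdet ▸ left_ne_zero_of_mul_eq_one (det_one_sub_mul_tsum_fockCoeff hr' htr htr')⟩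
  have hsum := hasSum_fockForm_prod_divPow_pairForm hr' htr htr'
    (diag_eq_zero_of_transpose_eq_neg ht) (diag_eq_zero_of_transpose_eq_neg ht')
  rw [hdet, ← ((symZeroDiagEquiv l).prodCongr (symZeroDiagEquiv l)).hasSum_iff] at hsum
  simp only [prod_mul_fockInnerL_XiL ht ht']
  exact hsum

/-- generating function for the Fock inner products `⟨Ξ[α], Ξ[β]⟩`: for
skew-symmetric real matrices `𝐓, 𝐓'` with sufficiently small entries, the series
`S = Σ_{α,β} (∏_{i<j} t_{ij}^{α_{ij}} t'_{ij}^{β_{ij}}/(α_{ij}!·β_{ij}!)) ⟨Ξ[α], Ξ[β]⟩`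
converges and `S = det(1 + 𝐓·𝐓')^{−1}`. -/
theorem generating_function_inner_products (l : ℕ) (hl : 2 ≤ l) :
    ∃ ε > (0 : ℝ), ∀ t t' : Matrix (Fin l) (Fin l) ℝ,
      t.transpose = -t → t'.transpose = -t' →
      (∀ i j, |t i j| < ε) → (∀ i j, |t' i j| < ε) →
      ∃ S : ℂ,
        HasSum
          (fun ab : SymZeroDiag l × SymZeroDiag l =>
            ((∏ p ∈ Finset.univ.filter (fun p : Fin l × Fin l => p.1 < p.2),
              t p.1 p.2 ^ ab.1.val p.1 p.2 * t' p.1 p.2 ^ ab.2.val p.1 p.2 /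
                ((ab.1.val p.1 p.2).factorial * (ab.2.val p.1 p.2).factorial : ℕ) : ℝ) : ℂ)
              * fockInnerL (XiL ab.1.val) (XiL ab.2.val))
          S ∧
        S * ((Matrix.det ((1 : Matrix (Fin l) (Fin l) ℝ) + t * t') : ℝ) : ℂ) = 1 := by
  refine ⟨1 / (l + 1), by positivity, fun t t' ht ht' hε hε' => ?_⟩
  have hr : |(l : ℝ) * (1 / (l + 1))| < 1 := by
    rw [mul_one_div, abs_of_nonneg (by positivity), div_lt_one (by positivity)]
    exact lt_add_one _
  have hskew (s : Matrix (Fin l) (Fin l) ℝ) (hs : sᵀ = -s) :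
      (Complex.ofRealHom.mapMatrix s)ᵀ = -Complex.ofRealHom.mapMatrix s := by
    rw [← map_neg, ← hs, RingHom.mapMatrix_apply, RingHom.mapMatrix_apply, transpose_map]
  obtain ⟨hsum, hdet⟩ := generating_function_inner_products_general hr (hskew t ht) (hskew t' ht')
    (by simpa using fun i j => (hε i j).le) (by simpa using fun i j => (hε' i j).le)
  rw [← map_mul, ← map_one Complex.ofRealHom.mapMatrix, ← map_add, ← RingHom.map_det] at hsum hdet
  exact ⟨_, by simpa using hsum, inv_mul_cancel₀ hdet⟩
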